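/- Positivity of the Riemannian metric G on spacelike slices (inequality (Gpositivity0)): let n, V ∈ ℝ⁴ with η(n,n) = −1 and η(V,V) < 0, and define the positive semidefinite form ḡ(X,Y) = η(X,Y) + η(n,X)·η(n,Y). Then η(n,V) ≠ 0, and for every X ∈ ℝ⁴, ḡ(X,X) − ḡ(V,X)² / η(n,V)² ≥ ( −η(V,V) / η(n,V)² ) · ḡ(X,X). -/

import Mathlib

/-!
The inequality is Cauchy–Schwarz for `ḡ`, because `ḡ(V,V) = η(V,V) + η(n,V)²`. That `ḡ` is positive
semidefinite and that `η(n,V) ≠ 0` both follow from the fact that a vector orthogonal to a timelike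
one is not timelike: otherwise the two span a plane on which `η` is negative definite, and this
plane meets the hyperplane `X₀ = 0`, on which `η` is nonnegative, in a nonzero vector.
-/

noncomputable section

/-- The Minkowski inner product on `ℝ⁴`: `η(X,Y) = -X₀Y₀ + X₁Y₁ + X₂Y₂ + X₃Y₃`. -/
def eta (X Y : Fin 4 → ℝ) : ℝ :=
  -(X 0 * Y 0) + X 1 * Y 1 + X 2 * Y 2 + X 3 * Y 3

/-- The projection of the metric away from a unit timelike vector `n`:
`ḡ(X,Y) = η(X,Y) + η(n,X)·η(n,Y)`. -/
def gbar (n X Y : Fin 4 → ℝ) : ℝ := eta X Y + eta n X * eta n Y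

open LinearMap (BilinForm)

section OrderedRing

variable {R M : Type*} [CommRing R] [AddCommGroup M] [Module R M]

/-- The spatial form `B(n,x) B(n,y) - B(n,n) B(x,y)` of an observer `n`. It is the projection of `B`
away from `n`, multiplied by `-B(n,n)` so that no division is needed; for a unit timelike `n` it is
the projected metric `ḡ`. -/
def spatialForm (B : BilinForm R M) (n : M) : BilinForm R M :=
  BilinForm.linMulLin (B n) (B n) - B n n • B

theorem spatialForm_apply (B : BilinForm R M) (n x y : M) :
    spatialForm B n x y = B n x * B n y - B n n * B x y := rfl

theorem isSymm_spatialForm {B : BilinForm R M} (hB : B.IsSymm) (n : M) :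
    (spatialForm B n).IsSymm where
  eq x y := by
    rw [spatialForm_apply, spatialForm_apply, hB.eq x y, mul_comm (B n x)]

variable [LinearOrder R] [IsStrictOrderedRing R] {B : BilinForm R M} {f : M →ₗ[R] R} {n x : M}

theorem nonneg_of_orthogonal_of_neg (hB : B.IsSymm) (hf : ∀ z, f z = 0 → 0 ≤ B z z)
    (hn : B n n < 0) (hnx : B n x = 0) : 0 ≤ B x x := by
  by_contra! hx
  have hfn : f n ≠ 0 := fun h ↦ hn.not_ge (hf n h)
  have hw : 0 ≤ B (f x • n - f n • x) (f x • n - f n • x) :=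
    hf _ (by simp [mul_comm])
  have hexpand : B (f x • n - f n • x) (f x • n - f n • x)
      = f x ^ 2 * B n n + f n ^ 2 * B x x := by
    simp only [map_sub, map_smul, LinearMap.sub_apply, LinearMap.smul_apply, smul_eq_mul,
      hB.eq x n, hnx]
    ring
  have hneg : f x ^ 2 * B n n + f n ^ 2 * B x x < 0 :=
    add_neg_of_nonpos_of_neg (mul_nonpos_of_nonneg_of_nonpos (sq_nonneg _) hn.le)
      (mul_neg_of_pos_of_neg (by positivity) hx)
  exact hneg.not_ge (hexpand ▸ hw)

theorem isPosSemidef_spatialForm (hB : B.IsSymm) (hf : ∀ z, f z = 0 → 0 ≤ B z z)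
    (hn : B n n < 0) : (spatialForm B n).IsPosSemidef where
  isSymm := isSymm_spatialForm hB n
  isNonneg.nonneg x := by
    have horth : B n (B n n • x - B n x • n) = 0 := by simp [mul_comm]
    have hexpand : B (B n n • x - B n x • n) (B n n • x - B n x • n)
        = -B n n * spatialForm B n x x := by
      simp only [spatialForm_apply, map_sub, map_smul, LinearMap.sub_apply, LinearMap.smul_apply,
        smul_eq_mul, hB.eq x n]
      ring
    have hw := nonneg_of_orthogonal_of_neg hB hf hn horth
    exact nonneg_of_mul_nonneg_right (hexpand ▸ hw) (neg_pos.mpr hn)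

end OrderedRing

theorem G_positivity_general {K E : Type*} [Field K] [LinearOrder K] [IsStrictOrderedRing K]
    [AddCommGroup E] [Module K E] {B : BilinForm K E} (hB : B.IsSymm) {f : E →ₗ[K] K}
    (hf : ∀ z, f z = 0 → 0 ≤ B z z) {n v : E} (hn : B n n < 0) (hv : B v v < 0) :
    B n v ≠ 0 ∧ ∀ x, B n n * B v v / B n v ^ 2 * spatialForm B n x x ≤
      spatialForm B n x x - spatialForm B n v x ^ 2 / B n v ^ 2 := by
  have hnv : B n v ≠ 0 := fun h ↦ hv.not_ge (nonneg_of_orthogonal_of_neg hB hf hn h)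
  refine ⟨hnv, fun x ↦ ?_⟩
  have hS := isPosSemidef_spatialForm hB hf hn
  have cauchy_schwarz : spatialForm B n v x ^ 2 ≤
      (B n v ^ 2 - B n n * B v v) * spatialForm B n x x := by
    simpa only [spatialForm_apply B n v v, ← sq] using
      (spatialForm B n).apply_sq_le_of_symm hS.nonneg ⟨hS.isSymm.eq⟩ v x
  calc B n n * B v v / B n v ^ 2 * spatialForm B n x x
      = spatialForm B n x x
          - (B n v ^ 2 - B n n * B v v) * spatialForm B n x x / B n v ^ 2 := by
        field_simp
        ring
    _ ≤ spatialForm B n x x - spatialForm B n v x ^ 2 / B n v ^ 2 := by gcongr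

/-- The Minkowski inner product `eta` as a bilinear form. -/
def minkowskiForm : BilinForm ℝ (Fin 4 → ℝ) :=
  LinearMap.mk₂ ℝ eta
    (fun _ _ _ ↦ by simp only [eta, Pi.add_apply]; ring)
    (fun _ _ _ ↦ by simp only [eta, Pi.smul_apply, smul_eq_mul]; ring)
    (fun _ _ _ ↦ by simp only [eta, Pi.add_apply]; ring)
    (fun _ _ _ ↦ by simp only [eta, Pi.smul_apply, smul_eq_mul]; ring)

theorem minkowskiForm_apply (X Y : Fin 4 → ℝ) : minkowskiForm X Y = eta X Y := rfl

theorem isSymm_minkowskiForm : minkowskiForm.IsSymm where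
  eq X Y := by simp only [minkowskiForm_apply, eta]; ring

theorem minkowskiForm_self_nonneg_of_time_eq_zero {X : Fin 4 → ℝ} (hX : X 0 = 0) :
    0 ≤ minkowskiForm X X := by
  rw [minkowskiForm_apply, eta, hX]
  linarith [mul_self_nonneg (X 1), mul_self_nonneg (X 2), mul_self_nonneg (X 3)]

theorem spatialForm_minkowskiForm {n : Fin 4 → ℝ} (hn : eta n n = -1) (X Y : Fin 4 → ℝ) :
    spatialForm minkowskiForm n X Y = gbar n X Y := by
  simp only [spatialForm_apply, minkowskiForm_apply, gbar, hn]
  ring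

/-- Positivity of the Riemannian metric `G` on spacelike slices (inequality (Gpositivity0)). -/
theorem G_positivity (n V : Fin 4 → ℝ)
    (hn : eta n n = -1) (hV : eta V V < 0) :
    eta n V ≠ 0 ∧
      ∀ X : Fin 4 → ℝ,
        gbar n X X - (gbar n V X) ^ 2 / (eta n V) ^ 2 ≥
          (-eta V V / (eta n V) ^ 2) * gbar n X X := by
  simpa only [minkowskiForm_apply, spatialForm_minkowskiForm hn, hn, neg_one_mul] using
    G_positivity_general (f := LinearMap.proj 0) isSymm_minkowskiForm
      (fun _ ↦ minkowskiForm_self_nonneg_of_time_eq_zero) (hn.trans_lt neg_one_lt_zero) hV
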